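/- arXiv:1204.6692 — 7 statements merged into one kernel-verified Lean document; each statement's English description precedes it below -/
import Mathlib

section
/- If f ∈ F_2[x] is a monic irreducible polynomial of degree n > 1, then either f^Q is a self-reciprocal irreducible polynomial of degree 2n, or f^Q is the product g · g* of a monic irreducible polynomial g of degree n and its reciprocal g*, where g* is also irreducible of degree n and neither g nor g* is self-reciprocal (in particular g ≠ g*). -/
open Polynomial

noncomputable def Qtrans (f : Polynomial (ZMod 2)) : Polynomial (ZMod 2) :=
  ∑ i ∈ Finset.range (f.natDegree + 1),
    C (f.coeff i) * X ^ (f.natDegree - i) * (X ^ 2 + 1) ^ i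

theorem aux_monic (p : (ZMod 2)[X]) (hp : p ≠ 0) : p.Monic := by
  have h : ∀ a : ZMod 2, a ≠ 0 → a = 1 := by decide
  exact h _ (leadingCoeff_ne_zero.mpr hp)

theorem aux_natDegree_reverse (p : (ZMod 2)[X]) (hp : p.coeff 0 ≠ 0) :
    p.reverse.natDegree = p.natDegree := by
  rw [reverse_natDegree, natTrailingDegree_eq_zero_of_constantCoeff_ne_zero hp, Nat.sub_zero]

theorem aux_reverse_reverse (p : (ZMod 2)[X]) (hp : p.coeff 0 ≠ 0) :
    p.reverse.reverse = p := by
  have h := aux_natDegree_reverse p hp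
  unfold reverse at h ⊢
  rw [h, reflect_reflect]

theorem aux_coeff_zero_reverse (p : (ZMod 2)[X]) (hp : p ≠ 0) : p.reverse.coeff 0 ≠ 0 := by
  rw [coeff_zero_reverse]
  exact leadingCoeff_ne_zero.mpr hp

theorem aux_isUnit (a : (ZMod 2)[X]) (ha : a.coeff 0 ≠ 0) (h : IsUnit a.reverse) : IsUnit a := by
  have h1 := natDegree_eq_zero_of_isUnit h
  rw [aux_natDegree_reverse a ha] at h1
  rw [eq_C_of_natDegree_eq_zero h1]
  exact isUnit_C.mpr (isUnit_iff_ne_zero.mpr ha)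

theorem aux_irr_reverse (g : (ZMod 2)[X]) (hg : Irreducible g) (h0 : g.coeff 0 ≠ 0) :
    Irreducible g.reverse := by
  refine ⟨fun h => hg.not_isUnit (aux_isUnit g h0 h), fun a b hab => ?_⟩
  have hr := aux_coeff_zero_reverse g hg.ne_zero
  rw [hab, mul_coeff_zero] at hr
  have h2 : g = a.reverse * b.reverse := by
    rw [← reverse_mul_of_domain, ← hab, aux_reverse_reverse g h0]
  rcases hg.isUnit_or_isUnit h2 with h | h
  · exact Or.inl (aux_isUnit a (left_ne_zero_of_mul hr) h)
  · exact Or.inr (aux_isUnit b (right_ne_zero_of_mul hr) h)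

theorem aux_aeval {K : Type*} [Field K] [Algebra (ZMod 2) K] (f : (ZMod 2)[X]) (α : K)
    (hα : α ≠ 0) : aeval α (Qtrans f) = α ^ f.natDegree * aeval (α + α⁻¹) f := by
  rw [aeval_eq_sum_range (p := f), Qtrans, map_sum, Finset.mul_sum]
  refine Finset.sum_congr rfl fun i hi => ?_
  have hi' : i ≤ f.natDegree := Nat.lt_succ_iff.mp (Finset.mem_range.mp hi)
  obtain ⟨k, hk⟩ := Nat.exists_eq_add_of_le hi'
  have h1 : α ^ 2 + 1 = α * (α + α⁻¹) := by field_simp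
  rw [hk, Nat.add_sub_cancel_left]
  simp only [map_mul, map_pow, map_add, aeval_X, aeval_C, map_one, h1, Algebra.smul_def, mul_pow]
  ring

theorem aux_deg_rest (f : (ZMod 2)[X]) (hn : 0 < f.natDegree) :
    (∑ i ∈ Finset.range f.natDegree,
    C (f.coeff i) * X ^ (f.natDegree - i) * (X ^ 2 + 1) ^ i : (ZMod 2)[X]).natDegree
      < 2 * f.natDegree := by
  refine lt_of_le_of_lt (natDegree_sum_le_of_forall_le (n := 2 * f.natDegree - 1) _ _ ?_) (by omega)
  intro i hi
  have hi' := Finset.mem_range.mp hi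
  have h1 : (C (f.coeff i) * X ^ (f.natDegree - i) : (ZMod 2)[X]).natDegree ≤ f.natDegree - i :=
    natDegree_C_mul_X_pow_le _ _
  have h2 : ((X ^ 2 + 1 : (ZMod 2)[X]) ^ i).natDegree ≤ i * 2 :=
    natDegree_pow_le_of_le i (by compute_degree)
  refine (natDegree_mul_le_of_le h1 h2).trans (by omega)

theorem aux_top (n : ℕ) : ((X ^ 2 + 1 : (ZMod 2)[X]) ^ n).natDegree = 2 * n := by
  rw [natDegree_pow, mul_comm]
  congr 1
  compute_degree!

theorem aux_natDegree (f : (ZMod 2)[X]) (hm : f.Monic) (hn : 0 < f.natDegree) :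
    (Qtrans f).natDegree = 2 * f.natDegree := by
  have h := aux_deg_rest f hn
  rw [Qtrans, Finset.sum_range_succ, natDegree_add_eq_right_of_natDegree_lt]
  · rw [hm.coeff_natDegree, Nat.sub_self, pow_zero, C_1, one_mul, one_mul, aux_top]
  · rwa [hm.coeff_natDegree, Nat.sub_self, pow_zero, C_1, one_mul, one_mul, aux_top]

theorem aux_reflect_base (i : ℕ) :
    reflect (2 * i) ((X ^ 2 + 1 : (ZMod 2)[X]) ^ i) = (X ^ 2 + 1) ^ i := by
  induction i with
  | zero => simp
  | succ k ih =>
    have h2 : (X ^ 2 + 1 : (ZMod 2)[X]).natDegree ≤ 2 := by compute_degree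
    rw [pow_succ, mul_add, mul_one, reflect_mul _ _ (aux_top k).le h2, ih]
    congr 1
    rw [reflect_add, reflect_monomial, reflect_one, revAt_le le_rfl]
    simp [add_comm]

theorem aux_reverse (f : (ZMod 2)[X]) (hm : f.Monic) (hn : 0 < f.natDegree) :
    (Qtrans f).reverse = Qtrans f := by
  rw [reverse, aux_natDegree f hm hn]
  have hs : ∀ (s : Finset ℕ) (N : ℕ) (F : ℕ → (ZMod 2)[X]),
      reflect N (∑ i ∈ s, F i) = ∑ i ∈ s, reflect N (F i) := by
    intro s N F
    classical
    induction s using Finset.induction_on with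
    | empty => simp
    | insert a s ha ih => rw [Finset.sum_insert ha, Finset.sum_insert ha, reflect_add, ih]
  unfold Qtrans
  rw [hs]
  refine Finset.sum_congr rfl fun i hi => ?_
  have hi' : i ≤ f.natDegree := Nat.lt_succ_iff.mp (Finset.mem_range.mp hi)
  obtain ⟨k, hk⟩ := Nat.exists_eq_add_of_le hi'
  rw [mul_assoc, reflect_C_mul]
  congr 1
  rw [hk, Nat.add_sub_cancel_left, mul_add, add_comm (2 * i),
    reflect_mul _ _ ((natDegree_X_pow_le k).trans (by omega)) (aux_top i).le,
    aux_reflect_base, reflect_monomial, revAt_le (by omega)]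
  congr 2
  omega

theorem stmt_9 (n : ℕ) (hn : 1 < n) (f : Polynomial (ZMod 2))
    (hmon : f.Monic) (hirr : Irreducible f) (hdeg : f.natDegree = n) :
    (Irreducible (Qtrans f) ∧ (Qtrans f).natDegree = 2 * n ∧
      (Qtrans f).reverse = Qtrans f) ∨
    (∃ g : Polynomial (ZMod 2),
      g.Monic ∧ Irreducible g ∧ g.natDegree = n ∧
      Qtrans f = g * g.reverse ∧
      Irreducible g.reverse ∧ g.reverse.natDegree = n ∧
      g.reverse ≠ g ∧ g.reverse.reverse ≠ g.reverse) := by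
  have hpos : 0 < f.natDegree := by omega
  have hFd := aux_natDegree f hmon hpos
  have hFr := aux_reverse f hmon hpos
  have hF0 : Qtrans f ≠ 0 := by
    intro h
    rw [h, natDegree_zero] at hFd
    omega
  have hFu : ¬ IsUnit (Qtrans f) := fun h => by
    have := natDegree_eq_zero_of_isUnit h
    omega
  have hFc : (Qtrans f).coeff 0 ≠ 0 := by
    rw [← hFr]
    exact aux_coeff_zero_reverse _ hF0
  obtain ⟨g, hg, hgF⟩ := WfDvdMonoid.exists_irreducible_factor hFu hF0
  have hgc : g.coeff 0 ≠ 0 := by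
    obtain ⟨q, hq⟩ := hgF
    rw [hq, mul_coeff_zero] at hFc
    exact left_ne_zero_of_mul hFc
  have hgm := aux_monic g hg.ne_zero
  haveI : Fact (Irreducible g) := ⟨hg⟩
  let pb := AdjoinRoot.powerBasis hg.ne_zero
  haveI : Module.Finite (ZMod 2) (AdjoinRoot g) := pb.finite
  have hfin : Module.finrank (ZMod 2) (AdjoinRoot g) = g.natDegree := pb.finrank
  set α : AdjoinRoot g := AdjoinRoot.root g with hα
  have hroot : aeval α g = 0 := by rw [AdjoinRoot.aeval_eq, AdjoinRoot.mk_self]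
  have hα0 : α ≠ 0 := by
    intro h
    rw [h, ← coeff_zero_eq_aeval_zero'] at hroot
    exact hgc ((map_eq_zero _).mp hroot)
  have hβ : aeval (α + α⁻¹) f = 0 := by
    have h1 : aeval α (Qtrans f) = 0 := by
      obtain ⟨q, hq⟩ := hgF
      rw [hq, map_mul, hroot, zero_mul]
    rw [aux_aeval f α hα0] at h1
    exact (mul_eq_zero.mp h1).resolve_left (pow_ne_zero _ hα0)
  have hmin : minpoly (ZMod 2) (α + α⁻¹) = f :=
    (minpoly.eq_of_irreducible_of_monic hirr hβ hmon).symm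
  have hdvd : n ∣ g.natDegree := by
    have := minpoly.degree_dvd (IsIntegral.of_finite (ZMod 2) (α + α⁻¹))
    rwa [hmin, hdeg, hfin] at this
  have hle : g.natDegree ≤ 2 * n := by
    have := natDegree_le_of_dvd hgF hF0
    omega
  have hgpos : 0 < g.natDegree := hg.natDegree_pos
  obtain ⟨c, hc⟩ := hdvd
  have hc2 : c = 1 ∨ c = 2 := by
    have h1 : c ≠ 0 := by rintro rfl; omega
    have h2 : c < 3 := by
      by_contra h
      have : n * 3 ≤ n * c := Nat.mul_le_mul_left n (by omega)
      omega
    omega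
  rcases hc2 with rfl | rfl
  · right
    have hgn : g.natDegree = n := by omega
    have hrd : g.reverse.natDegree = n := by rw [aux_natDegree_reverse g hgc, hgn]
    have hri := aux_irr_reverse g hg hgc
    have hne : g.reverse ≠ g := by
      intro heq
      have hinv : aeval α⁻¹ g = 0 := by
        letI : Invertible α := invertibleOfNonzero hα0
        have h3 := (eval₂_reverse_eq_zero_iff (algebraMap (ZMod 2) (AdjoinRoot g)) α g).mpr
          hroot
        rw [invOf_eq_inv] at h3
        have h4 : aeval α⁻¹ g.reverse = 0 := h3
        have h5 := congrArg (aeval α⁻¹) heq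
        exact h5.symm.trans h4
      let σ : AdjoinRoot g →ₐ[ZMod 2] AdjoinRoot g :=
        AdjoinRoot.liftAlgHom g (Algebra.ofId (ZMod 2) (AdjoinRoot g)) α⁻¹ hinv
      have hσ : σ α = α⁻¹ := AdjoinRoot.lift_root hinv
      have htop : IntermediateField.adjoin (ZMod 2) {α + α⁻¹} = ⊤ := by
        rw [Field.primitive_element_iff_minpoly_natDegree_eq, hmin, hfin, hdeg, hgn]
      have hmem : α ∈ (IntermediateField.adjoin (ZMod 2) {α + α⁻¹}).toSubalgebra := by
        rw [htop]; trivial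
      rw [IntermediateField.adjoin_simple_toSubalgebra_of_isAlgebraic
        (Algebra.IsAlgebraic.isAlgebraic _), Algebra.adjoin_singleton_eq_range_aeval] at hmem
      obtain ⟨p, hp⟩ := hmem
      have hp' : aeval (α + α⁻¹) p = α := hp
      have hfix : σ α = α := by
        have h5 : σ (α + α⁻¹) = α + α⁻¹ := by
          rw [map_add, map_inv₀, hσ, inv_inv, add_comm]
        calc σ α = σ (aeval (α + α⁻¹) p) := by rw [hp']
          _ = α := by rw [← aeval_algHom_apply, h5, hp']
      rw [hσ] at hfix
      haveI : CharP (AdjoinRoot g) 2 := charP_of_injective_algebraMap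
        (algebraMap (ZMod 2) (AdjoinRoot g)).injective 2
      rw [hfix, CharTwo.add_self_eq_zero, minpoly.zero] at hmin
      rw [← hmin, natDegree_X] at hdeg
      omega
    refine ⟨g, hgm, hg, hgn, ?_, hri, hrd, hne, ?_⟩
    · have hrF : g.reverse ∣ Qtrans f := by
        obtain ⟨q, hq⟩ := hgF
        rw [← hFr, hq, reverse_mul_of_domain]
        exact Dvd.intro _ rfl
      have hrm := aux_monic _ hri.ne_zero
      have hcop : IsCoprime g g.reverse := by
        refine hg.coprime_iff_not_dvd.mpr fun h => hne ?_
        exact (eq_of_monic_of_associated hgm hrm (hg.associated_of_dvd hri h)).symm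
      refine eq_of_monic_of_dvd_of_natDegree_le (hgm.mul hrm) (aux_monic _ hF0)
        (hcop.mul_dvd hgF hrF) ?_ 
      rw [hgm.natDegree_mul hrm]
      omega
    · rw [aux_reverse_reverse g hgc]
      exact hne.symm
  · left
    have : Qtrans f = g :=
      eq_of_monic_of_dvd_of_natDegree_le hgm (aux_monic _ hF0) hgF (by omega)
    refine ⟨this ▸ hg, by omega, hFr⟩
end

section
/- Suppose g = x^{2n} + b_{2n-1}x^{2n-1} + ⋯ + b_1 x + b_0 ∈ F_2[x] is a self-reciprocal polynomial of degree 2n which factors as g = f · f*, where f = x^n + a_{n-1}x^{n-1} + ⋯ + a_1 x + a_0 is monic irreducible over F_2 of degree n with a_0 = 1. Then: if b_{2n-1} = b_1 = 0 then a_{n-1} = a_1; and if b_{2n-1} = b_1 = 1 then a_{n-1} ≠ a_1, i.e. one of f, f* is of type (B,n) and the other is of type (C,n). -/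
open Polynomial

theorem stmt_10 (n : ℕ) (g f : Polynomial (ZMod 2))
    (hgdeg : g.natDegree = 2 * n) (hself : g.reverse = g)
    (hfmon : f.Monic) (hfirr : Irreducible f) (hfdeg : f.natDegree = n)
    (hf0 : f.coeff 0 = 1) (hfact : g = f * f.reverse) :
    (g.coeff (2 * n - 1) = 0 ∧ g.coeff 1 = 0 → f.coeff (n - 1) = f.coeff 1) ∧
    (g.coeff (2 * n - 1) = 1 ∧ g.coeff 1 = 1 → f.coeff (n - 1) ≠ f.coeff 1) := by
  have hn : 1 ≤ n := hfdeg ▸ hfirr.natDegree_pos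
  have h1 : f.reverse.coeff 1 = f.coeff (n - 1) := by
    rw [coeff_reverse, hfdeg, revAt_le hn]
  have h0 : f.reverse.coeff 0 = 1 := by
    rw [coeff_zero_reverse, hfmon.leadingCoeff]
  have hg : g.coeff 1 = f.coeff (n - 1) + f.coeff 1 := by
    rw [hfact, coeff_mul, Finset.Nat.antidiagonal_succ]
    simp [h1, h0, hf0]
  rw [hg]
  generalize f.coeff (n - 1) = a
  generalize f.coeff 1 = b
  have key : ∀ a b : ZMod 2, (a + b = 0 → a = b) ∧ (a + b = 1 → a ≠ b) := by decide
  exact ⟨fun h => (key a b).1 h.2, fun h => (key a b).2 h.2⟩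
end

section
/- Let f ∈ F_2[x] be a monic irreducible polynomial of degree n ≥ 1 and let g = f^Q be its Q-transform, of degree 2n. Then coeff g (2n−1) = coeff g 1 = coeff f (n−1); in particular, if coeff f (n−1) = 1 then coeff g (2n−1) = coeff g 1 = 1, and if coeff f (n−1) = 0 then coeff g (2n−1) = coeff g 1 = 0. -/
open Polynomial

theorem stmt_11 (n : ℕ) (hn : 1 ≤ n) (f : Polynomial (ZMod 2))
    (hmon : f.Monic) (hirr : Irreducible f) (hdeg : f.natDegree = n) :
    (Qtrans f).coeff (2 * n - 1) = f.coeff (n - 1) ∧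
    (Qtrans f).coeff 1 = f.coeff (n - 1) := by
  obtain ⟨m, rfl⟩ : ∃ m, n = m + 1 := ⟨n - 1, by omega⟩
  have hlead : f.coeff (m + 1) = 1 := by
    rw [← hdeg]; exact hmon
  have hexp : ∀ i : ℕ, ((X ^ 2 + 1 : Polynomial (ZMod 2)) ^ i)
      = expand (ZMod 2) 2 ((X + 1) ^ i) := by
    intro i
    simp
  have hodd : ∀ i k : ℕ, ((X ^ 2 + 1 : Polynomial (ZMod 2)) ^ i).coeff (2 * k + 1) = 0 := by
    intro i k
    rw [hexp, coeff_expand (by norm_num), if_neg (by omega)]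
  have heven : ∀ i k : ℕ, ((X ^ 2 + 1 : Polynomial (ZMod 2)) ^ i).coeff (2 * k)
      = (i.choose k : ZMod 2) := by
    intro i k
    rw [hexp, coeff_expand (by norm_num), if_pos (by omega), coeff_X_add_one_pow]
    congr 2
    omega
  have hbig : ∀ i k : ℕ, 2 * i < k → ((X ^ 2 + 1 : Polynomial (ZMod 2)) ^ i).coeff k = 0 := by
    intro i k h
    rcases Nat.even_or_odd' k with ⟨j, rfl | rfl⟩
    · rw [heven, Nat.choose_eq_zero_of_lt (by omega)]; simp
    · exact hodd i j
  have key : ∀ k i : ℕ, (C (f.coeff i) * X ^ (m + 1 - i) * (X ^ 2 + 1) ^ i).coeff k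
      = f.coeff i * (if m + 1 - i ≤ k then
        ((X ^ 2 + 1 : Polynomial (ZMod 2)) ^ i).coeff (k - (m + 1 - i)) else 0) := by
    intro k i
    rw [mul_assoc, coeff_C_mul, coeff_X_pow_mul']
  unfold Qtrans
  rw [hdeg]
  simp only [finset_sum_coeff, key]
  rw [Finset.sum_range_succ, Finset.sum_range_succ, Finset.sum_range_succ, Finset.sum_range_succ]
  constructor
  · rw [Finset.sum_eq_zero]
    · have h1 : 2 * (m + 1) - 1 - (m + 1 - m) = 2 * m := by omega
      have h2 : 2 * (m + 1) - 1 - (m + 1 - (m + 1)) = 2 * m + 1 := by omega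
      rw [h1, h2, heven, hodd, if_pos (by omega)]
      simp
    · intro i hi
      have := Finset.mem_range.mp hi
      rw [if_pos (by omega), hbig _ _ (by omega), mul_zero]
  · rw [Finset.sum_eq_zero]
    · have h1 : 1 - (m + 1 - m) = 2 * 0 := by omega
      have h2 : 1 - (m + 1 - (m + 1)) = 2 * 0 + 1 := by omega
      rw [h1, h2, heven, hodd, if_pos (by omega)]
      simp
    · intro i hi
      have := Finset.mem_range.mp hi
      rw [if_neg (by omega), mul_zero]
end

section
/- Let f ∈ F_2[x] be a polynomial of degree n, let K be a field of characteristic 2 that is an F_2-algebra, and let β ∈ K with β ≠ 0. If β + β⁻¹ is a root of f (i.e. the evaluation of f at β + β⁻¹ via the algebra map is 0), then β is a root of f^Q. -/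
open Polynomial

theorem stmt_12 (n : ℕ) (f : Polynomial (ZMod 2)) (hdeg : f.natDegree = n)
    (K : Type*) [Field K] [CharP K 2] [Algebra (ZMod 2) K]
    (β : K) (hβ : β ≠ 0) (hroot : Polynomial.aeval (β + β⁻¹) f = 0) :
    Polynomial.aeval β (Qtrans f) = 0 := by
  have key : Polynomial.aeval β (Qtrans f) = β ^ f.natDegree * Polynomial.aeval (β + β⁻¹) f := by
    rw [Polynomial.aeval_eq_sum_range (p := f), Qtrans, map_sum, Finset.mul_sum]
    refine Finset.sum_congr rfl fun i hi => ?_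
    have hi' : i ≤ f.natDegree := Nat.lt_succ_iff.mp (Finset.mem_range.mp hi)
    have h1 : β ^ 2 + 1 = β * (β + β⁻¹) := by field_simp
    have h2 : β ^ f.natDegree = β ^ (f.natDegree - i) * β ^ i := by
      rw [← pow_add, Nat.sub_add_cancel hi']
    simp only [map_mul, map_pow, map_add, map_one, aeval_X, aeval_C, Algebra.smul_def]
    rw [h1, h2, mul_pow]
    ring
  rw [key, hroot, mul_zero]
end

section
/- Let f = x^n + ⋯ + a_1 x + 1 ∈ F_2[x] be a monic irreducible polynomial of degree n ≥ 1 with constant term 1. Then f^Q is irreducible over F_2 if and only if a_1 = coeff f 1 = 1. -/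
open Polynomial

lemma Qtrans_monic_aux (f : Polynomial (ZMod 2)) (hn : 1 ≤ f.natDegree) (hmon : f.Monic) :
    (Qtrans f).Monic ∧ (Qtrans f).natDegree = 2 * f.natDegree := by
  set n := f.natDegree with hnd
  have hX : (X ^ 2 + 1 : Polynomial (ZMod 2)).Monic := by monicity!
  have hXd : (X ^ 2 + 1 : Polynomial (ZMod 2)).natDegree = 2 := by compute_degree!
  have hlast : ((X ^ 2 + 1 : Polynomial (ZMod 2)) ^ n).Monic := hX.pow n
  have hlastd : ((X ^ 2 + 1 : Polynomial (ZMod 2)) ^ n).natDegree = 2 * n := by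
    rw [hX.natDegree_pow, hXd, mul_comm]
  set r : Polynomial (ZMod 2) := ∑ i ∈ Finset.range n,
    C (f.coeff i) * X ^ (n - i) * (X ^ 2 + 1) ^ i with hr
  have hQ : Qtrans f = (X ^ 2 + 1) ^ n + r := by
    unfold Qtrans
    rw [← hnd, Finset.sum_range_succ, add_comm]
    have : f.coeff n = 1 := hmon
    simp [this, hr]
  have hrd : r.natDegree ≤ 2 * n - 1 := by
    apply natDegree_sum_le_of_forall_le
    intro i hi
    rw [Finset.mem_range] at hi
    have h1 : ((X ^ 2 + 1 : Polynomial (ZMod 2)) ^ i).natDegree = i * 2 := by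
      rw [hX.natDegree_pow, hXd]
    have h2 := natDegree_mul_le (p := C (f.coeff i) * X ^ (n - i)) (q := (X ^ 2 + 1) ^ i)
    have h3 := natDegree_C_mul_X_pow_le (f.coeff i) (n - i)
    omega
  have hlt : r.degree < ((X ^ 2 + 1 : Polynomial (ZMod 2)) ^ n).degree := by
    rw [degree_eq_natDegree hlast.ne_zero, hlastd]
    refine lt_of_le_of_lt degree_le_natDegree ?_
    exact_mod_cast (by omega : r.natDegree < 2 * n)
  rw [hQ]
  refine ⟨hlast.add_of_left hlt, ?_⟩
  rw [natDegree_add_eq_left_of_degree_lt hlt, hlastd]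

lemma minpoly_deg_dvd_iff {L : Type*} [Field L] [Algebra (ZMod 2) L] (x : L)
    (hx : IsIntegral (ZMod 2) x) (m : ℕ) :
    (minpoly (ZMod 2) x).natDegree ∣ m ↔ x ^ 2 ^ m = x := by
  rw [(minpoly.irreducible hx).natDegree_dvd_iff_dvd_X_pow_card_pow_sub_X, minpoly.dvd_iff]
  simp [sub_eq_zero]

lemma trace_inv_root (f : Polynomial (ZMod 2)) [Fact (Irreducible f)] (hn : 1 ≤ f.natDegree)
    (hmon : f.Monic) (h0 : f.coeff 0 = 1) :
    Algebra.trace (ZMod 2) (AdjoinRoot f) (AdjoinRoot.root f)⁻¹ = f.coeff 1 := by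
  have hirr : Irreducible f := Fact.out
  have hf0 := hirr.ne_zero
  have ha : minpoly (ZMod 2) (AdjoinRoot.root f) = f := by
    rw [AdjoinRoot.minpoly_root hf0, hmon.leadingCoeff]; simp
  have hroot : aeval (AdjoinRoot.root f) f = 0 := by
    rw [AdjoinRoot.aeval_eq, AdjoinRoot.mk_self]
  have hne : AdjoinRoot.root f ≠ 0 := by
    intro h
    rw [h, ← coeff_zero_eq_aeval_zero', h0] at hroot
    simp at hroot
  have htd : f.natTrailingDegree = 0 := natTrailingDegree_eq_zero.2 (Or.inr (by rw [h0]; simp))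
  have hrevd : f.reverse.natDegree = f.natDegree := by rw [reverse_natDegree, htd, Nat.sub_zero]
  have hrevm : f.reverse.Monic := by
    rw [Monic, reverse_leadingCoeff, trailingCoeff, htd, h0]
  have hmin : minpoly (ZMod 2) (AdjoinRoot.root f)⁻¹ = f.reverse := by
    symm
    apply minpoly.unique _ _ hrevm
    · let := invertibleOfNonzero hne
      have := (eval₂_reverse_eq_zero_iff (algebraMap (ZMod 2) (AdjoinRoot f))
        (AdjoinRoot.root f) f).2 hroot
      rwa [invOf_eq_inv] at this
    · intro q hq hq0
      let := invertibleOfNonzero (inv_ne_zero hne)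
      have := (eval₂_reverse_eq_zero_iff (algebraMap (ZMod 2) (AdjoinRoot f))
        (AdjoinRoot.root f)⁻¹ q).2 hq0
      rw [invOf_eq_inv, inv_inv] at this
      have hd : f ∣ q.reverse := ha ▸ minpoly.dvd _ _ this
      have h1 := natDegree_le_of_dvd hd (by simpa using hq.ne_zero)
      have h2 := reverse_natDegree_le q
      rw [degree_eq_natDegree hrevm.ne_zero, degree_eq_natDegree hq.ne_zero, hrevd]
      exact_mod_cast h1.trans h2
  have : Module.Finite (ZMod 2) (AdjoinRoot f) := hmon.finite_adjoinRoot
  have hint : IsIntegral (ZMod 2) (AdjoinRoot.root f)⁻¹ := .of_finite _ _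
  have hfr : Module.finrank (ZMod 2) (AdjoinRoot f) = f.natDegree := by
    rw [(AdjoinRoot.powerBasis hf0).finrank, AdjoinRoot.powerBasis_dim]
  have hfr2 : Module.finrank (IntermediateField.adjoin (ZMod 2) {(AdjoinRoot.root f)⁻¹})
      (AdjoinRoot f) = 1 := by
    have h1 := Module.finrank_mul_finrank (ZMod 2)
      (IntermediateField.adjoin (ZMod 2) {(AdjoinRoot.root f)⁻¹}) (AdjoinRoot f)
    rw [IntermediateField.adjoin.finrank hint, hmin, hrevd, hfr] at h1
    exact Nat.eq_of_mul_eq_mul_left hn (by omega)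
  rw [trace_eq_finrank_mul_minpoly_nextCoeff, hfr2, hmin, nextCoeff_of_natDegree_pos (by omega),
    hrevd, coeff_reverse, revAt_le (by omega), Nat.sub_sub_self hn, ZMod.neg_eq_self_mod_two]
  simp

theorem stmt_13 (n : ℕ) (hn : 1 ≤ n) (f : Polynomial (ZMod 2))
    (hmon : f.Monic) (hirr : Irreducible f) (hdeg : f.natDegree = n)
    (h0 : f.coeff 0 = 1) :
    Irreducible (Qtrans f) ↔ f.coeff 1 = 1 := by
  have : Fact (Irreducible f) := ⟨hirr⟩
  have hf0 := hirr.ne_zero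
  obtain ⟨hQm, hQd⟩ := Qtrans_monic_aux f (by omega) hmon
  have htr := trace_inv_root f (by omega) hmon h0
  have : Module.Finite (ZMod 2) (AdjoinRoot f) := hmon.finite_adjoinRoot
  have : Finite (AdjoinRoot f) := Module.finite_of_finite (ZMod 2)
  have hfr : Module.finrank (ZMod 2) (AdjoinRoot f) = n := by
    rw [(AdjoinRoot.powerBasis hf0).finrank, AdjoinRoot.powerBasis_dim, hdeg]
  have hsum := FiniteField.algebraMap_trace_eq_sum_pow (ZMod 2) (AdjoinRoot f)
    (AdjoinRoot.root f)⁻¹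
  rw [htr, hfr] at hsum
  simp only [Nat.card_zmod] at hsum
  let L := AlgebraicClosure (AdjoinRoot f)
  have : CharP L 2 := charP_of_injective_algebraMap (algebraMap (ZMod 2) L).injective 2
  obtain ⟨α, hα⟩ : ∃ α : L, α = algebraMap (AdjoinRoot f) L (AdjoinRoot.root f) := ⟨_, rfl⟩
  have hsumL : algebraMap (ZMod 2) L (f.coeff 1) = ∑ i ∈ Finset.range n, (α⁻¹) ^ 2 ^ i := by
    rw [IsScalarTower.algebraMap_apply (ZMod 2) (AdjoinRoot f) L, hsum, hα]
    simp
  have hroot : aeval α f = 0 := by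
    rw [hα, aeval_algebraMap_apply, AdjoinRoot.aeval_eq, AdjoinRoot.mk_self, map_zero]
  have hαint : IsIntegral (ZMod 2) α := ⟨f, hmon, hroot⟩
  have hαmin : minpoly (ZMod 2) α = f := (minpoly.eq_of_irreducible_of_monic hirr hroot hmon).symm
  have hα0 : α ≠ 0 := by
    intro h
    rw [h, ← coeff_zero_eq_aeval_zero', h0] at hroot
    simp at hroot
  have hαpow : ∀ m, n ∣ m ↔ α ^ 2 ^ m = α := by
    intro m
    rw [← minpoly_deg_dvd_iff α hαint, hαmin, hdeg]
  obtain ⟨β, hβ⟩ : ∃ β : L, β ^ 2 + 1 = α * β := by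
    obtain ⟨β, hβ⟩ := IsAlgClosed.exists_root (X ^ 2 + C α * X + 1 : L[X]) (by
      have : (X ^ 2 + C α * X + 1 : L[X]).degree = 2 := by compute_degree!
      rw [this]; norm_num)
    refine ⟨β, ?_⟩
    simp only [IsRoot, eval_add, eval_pow, eval_X, eval_mul, eval_C, eval_one] at hβ
    have : β ^ 2 + 1 + α * β = 0 := by linear_combination hβ
    exact CharTwo.add_eq_zero.1 this
  have hβ0 : β ≠ 0 := by
    rintro rfl
    simp at hβ
  have hQroot : aeval β (Qtrans f) = 0 := by
    have h1 : aeval β (Qtrans f) = β ^ n * aeval α f := by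
      rw [aeval_eq_sum_range (x := α), Finset.mul_sum, Qtrans, map_sum, hdeg]
      refine Finset.sum_congr rfl fun i hi => ?_
      have hi' : i ≤ n := by simpa [Nat.lt_succ_iff] using hi
      simp only [map_mul, map_pow, map_add, map_one, aeval_X, aeval_C, hβ, Algebra.smul_def]
      rw [← Nat.sub_add_cancel hi', pow_add, Nat.add_sub_cancel, mul_pow]
      ring
    rw [h1, hroot, mul_zero]
  have hβint : IsIntegral (ZMod 2) β := ⟨_, hQm, hQroot⟩
  have hβpow := minpoly_deg_dvd_iff β hβint
  -- iterating the quadratic relation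
  have key : ∀ m, β ^ 2 ^ m = β * (α⁻¹) * α ^ 2 ^ m
      + α ^ 2 ^ m * (∑ i ∈ Finset.range m, (α⁻¹) ^ 2 ^ i) ^ 2 := by
    intro m
    induction m with
    | zero => simp [hα0]
    | succ m ih =>
      have e : β ^ 2 = α * β + 1 := by
        have : β ^ 2 + 1 + 1 = α * β + 1 := by rw [hβ]
        rwa [add_assoc, CharTwo.add_self_eq_zero, add_zero] at this
      have e2 : α * α⁻¹ = 1 := mul_inv_cancel₀ hα0
      rw [Finset.sum_range_succ', pow_succ 2 m, pow_mul, ih]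
      have e3 : ∑ i ∈ Finset.range m, (α⁻¹) ^ 2 ^ (i + 1)
          = (∑ i ∈ Finset.range m, (α⁻¹) ^ 2 ^ i) ^ 2 := by
        rw [CharTwo.sum_sq]
        exact Finset.sum_congr rfl fun i _ => by rw [pow_succ, pow_mul]
      rw [e3, CharTwo.add_sq, mul_pow, mul_pow, CharTwo.add_sq, pow_mul, mul_pow, e]
      simp only [pow_zero, pow_one]
      linear_combination (α⁻¹ * β * (α ^ 2 ^ m) ^ 2) * e2
  have hβn : β ^ 2 ^ n = β + α * algebraMap (ZMod 2) L (f.coeff 1) ^ 2 := by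
    rw [key n, (hαpow n).1 dvd_rfl, hsumL, mul_assoc, inv_mul_cancel₀ hα0, mul_one]
  have hc : f.coeff 1 = 0 ∨ f.coeff 1 = 1 := by
    generalize f.coeff 1 = c
    revert c; decide
  constructor
  · intro hI
    rcases hc with hc | hc
    · exfalso
      rw [hc] at hβn
      have h1 := (hβpow n).2 (by simpa using hβn)
      rw [← minpoly.eq_of_irreducible_of_monic hI hQroot hQm, hQd, hdeg] at h1
      have := Nat.le_of_dvd hn h1
      omega
    · exact hc
  · intro hc
    rw [hc, map_one, one_pow, mul_one] at hβn
    have h2 : (minpoly (ZMod 2) β).natDegree ∣ 2 * n := by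
      rw [hβpow, two_mul, pow_add, pow_mul, hβn, add_pow_char_pow, hβn, (hαpow n).1 dvd_rfl,
        add_assoc, CharTwo.add_self_eq_zero, add_zero]
    have h1 : ¬ (minpoly (ZMod 2) β).natDegree ∣ n := by
      rw [hβpow, hβn]
      simpa using hα0
    have h3 : n ∣ (minpoly (ZMod 2) β).natDegree := by
      rw [hαpow]
      have e : α = β + β⁻¹ := by
        apply mul_right_cancel₀ hβ0
        rw [← hβ, add_mul, inv_mul_cancel₀ hβ0, sq]
      have := (hβpow _).1 dvd_rfl
      rw [e, add_pow_char_pow, inv_pow, this]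
    have h4 : (minpoly (ZMod 2) β).natDegree = 2 * n := by
      obtain ⟨k, hk⟩ := h3
      rw [hk] at h1 h2 ⊢
      rw [mul_comm 2 n] at h2
      have h5 : k ∣ 2 := Nat.dvd_of_mul_dvd_mul_left hn h2
      rcases (Nat.dvd_prime Nat.prime_two).1 h5 with rfl | rfl
      · simp at h1
      · ring
    have : Qtrans f = minpoly (ZMod 2) β := by
      refine (eq_of_monic_of_dvd_of_natDegree_le (minpoly.monic hβint) hQm
        (minpoly.dvd _ _ hQroot) ?_)
      rw [hQd, h4, hdeg]
    rw [this]
    exact minpoly.irreducible hβint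
end

section
/- If f = x^n + a_{n-1}x^{n-1} + ⋯ + a_1 x + 1 ∈ F_2[x] is a monic irreducible polynomial of degree n ≥ 1 with constant term 1 such that a_{n-1} = a_1 = 1, then f^Q is a self-reciprocal irreducible polynomial of degree 2n over F_2. -/
open Polynomial

lemma qt_eval {L : Type*} [Field L] [Algebra (ZMod 2) L] (f : Polynomial (ZMod 2)) (a : L)
    (ha : a ≠ 0) :
    aeval a (Qtrans f) = a ^ f.natDegree * aeval (a + a⁻¹) f := by
  rw [Qtrans, aeval_eq_sum_range (p := f), map_sum, Finset.mul_sum]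
  refine Finset.sum_congr rfl fun i hi => ?_
  have hi' : i ≤ f.natDegree := Nat.lt_succ_iff.mp (Finset.mem_range.mp hi)
  have h1 : a ^ f.natDegree = a ^ (f.natDegree - i) * a ^ i := by
    rw [← pow_add, Nat.sub_add_cancel hi']
  have h2 : a ^ 2 + 1 = a * (a + a⁻¹) := by field_simp
  simp only [map_mul, map_pow, aeval_C, aeval_X, map_add, map_one, Algebra.smul_def]
  rw [h1, h2, mul_pow]
  ring

lemma base_monic : ((X : (ZMod 2)[X]) ^ 2 + 1).Monic := by
  simpa using monic_X_pow_add_C (1 : ZMod 2) (n := 2) (by norm_num)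

lemma base_deg : ((X : (ZMod 2)[X]) ^ 2 + 1).natDegree = 2 := by
  simpa using natDegree_X_pow_add_C (n := 2) (r := (1 : ZMod 2))

lemma pow_deg (i : ℕ) : (((X : (ZMod 2)[X]) ^ 2 + 1) ^ i).natDegree = 2 * i := by
  rw [base_monic.natDegree_pow, base_deg, mul_comm]

lemma qt_monic_deg (f : Polynomial (ZMod 2)) (hf : f.Monic) :
    (Qtrans f).Monic ∧ (Qtrans f).natDegree = 2 * f.natDegree := by
  have hm : (((X : (ZMod 2)[X]) ^ 2 + 1) ^ f.natDegree).Monic := base_monic.pow _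
  have hlt : (∑ i ∈ Finset.range f.natDegree,
      C (f.coeff i) * X ^ (f.natDegree - i) * ((X : (ZMod 2)[X]) ^ 2 + 1) ^ i).degree <
      (((X : (ZMod 2)[X]) ^ 2 + 1) ^ f.natDegree).degree := by
    rw [degree_eq_natDegree hm.ne_zero, pow_deg]
    refine (degree_lt_iff_coeff_zero _ _).2 fun k hk => ?_
    rw [finsetSum_coeff]
    refine Finset.sum_eq_zero fun i hi => ?_
    have hi' := Finset.mem_range.mp hi
    apply coeff_eq_zero_of_natDegree_lt
    have h1 := natDegree_mul_le (p := C (f.coeff i) * X ^ (f.natDegree - i))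
      (q := ((X : (ZMod 2)[X]) ^ 2 + 1) ^ i)
    have h2 := natDegree_C_mul_X_pow_le (f.coeff i) (f.natDegree - i)
    rw [pow_deg] at h1
    omega
  have hQ : Qtrans f = (∑ i ∈ Finset.range f.natDegree,
      C (f.coeff i) * X ^ (f.natDegree - i) * ((X : (ZMod 2)[X]) ^ 2 + 1) ^ i) +
      ((X : (ZMod 2)[X]) ^ 2 + 1) ^ f.natDegree := by
    rw [Qtrans, Finset.sum_range_succ, hf.coeff_natDegree]
    simp
  rw [hQ]
  exact ⟨hm.add_of_right hlt, by rw [natDegree_add_eq_right_of_degree_lt hlt, pow_deg]⟩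

lemma reflect_base_pow (i : ℕ) :
    reflect (2 * i) (((X : (ZMod 2)[X]) ^ 2 + 1) ^ i) = (X ^ 2 + 1) ^ i := by
  induction i with
  | zero => simp [reflect_one]
  | succ k ih =>
    rw [pow_succ, mul_add, mul_one, reflect_mul _ _ (pow_deg k).le base_deg.le, ih]
    congr 1
    rw [reflect_add, reflect_monomial, ← C_1, reflect_C, revAt_le le_rfl]
    simp [add_comm]

lemma reflect_sum' (N : ℕ) (s : Finset ℕ) (g : ℕ → (ZMod 2)[X]) :
    reflect N (∑ i ∈ s, g i) = ∑ i ∈ s, reflect N (g i) := by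
  ext k
  simp [coeff_reflect, finsetSum_coeff]

lemma qt_reverse (f : Polynomial (ZMod 2)) (hf : f.Monic) :
    (Qtrans f).reverse = Qtrans f := by
  rw [reverse, (qt_monic_deg f hf).2]
  rw [Qtrans, reflect_sum']
  refine Finset.sum_congr rfl fun i hi => ?_
  have hi' : i ≤ f.natDegree := Nat.lt_succ_iff.mp (Finset.mem_range.mp hi)
  have : 2 * f.natDegree = 2 * (f.natDegree - i) + 2 * i := by omega
  rw [mul_assoc, reflect_C_mul, this, reflect_mul _ _ _ (pow_deg i).le, reflect_base_pow,
    reflect_monomial, revAt_le (by omega)]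
  · congr 3
    omega
  · rw [natDegree_X_pow]
    omega

lemma key {L : Type*} [Field L] [Algebra (ZMod 2) L] [FiniteDimensional (ZMod 2) L]
    (f : Polynomial (ZMod 2)) (hmon : f.Monic) (hirr : Irreducible f)
    (h0 : f.coeff 0 = 1) (h1 : f.coeff 1 = 1) (a : L) (ha : a ≠ 0)
    (hf : aeval (a + a⁻¹) f = 0) : Module.finrank (ZMod 2) L ≠ f.natDegree := by
  intro hfin
  have : CharP L 2 := charP_of_injective_algebraMap (algebraMap (ZMod 2) L).injective 2
  set b := a + a⁻¹ with hb
  have hb0 : b ≠ 0 := by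
    intro h
    rw [h, ← coeff_zero_eq_aeval_zero', h0] at hf
    simp at hf
  set m := minpoly (ZMod 2) b⁻¹ with hm
  have hint : IsIntegral (ZMod 2) b⁻¹ := .of_finite _ _
  have hm0 : m ≠ 0 := minpoly.ne_zero hint
  have hrev : aeval b m.reverse = 0 := by
    let : Invertible (b⁻¹) := invertibleOfNonzero (inv_ne_zero hb0)
    have := (eval₂_reverse_eq_zero_iff (algebraMap (ZMod 2) L) b⁻¹ m).2 (minpoly.aeval _ _)
    simpa [aeval_def] using this
  have hmin : f = minpoly (ZMod 2) b := minpoly.eq_of_irreducible_of_monic hirr hf hmon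
  have hdvd : f ∣ m.reverse := by rw [hmin]; exact minpoly.dvd _ _ hrev
  have hr0 : m.reverse ≠ 0 := by simpa using hm0
  have hle1 := natDegree_le_of_dvd hdvd hr0
  have hle2 := reverse_natDegree_le m
  have hle3 : m.natDegree ≤ f.natDegree := by rw [← hfin]; exact minpoly.natDegree_le _
  have hlc : m.reverse.leadingCoeff = 1 := by
    have h : ∀ c : ZMod 2, c ≠ 0 → c = 1 := by decide
    exact h _ (leadingCoeff_ne_zero.2 hr0)
  have heq : m.reverse = f := by
    refine (eq_of_monic_of_associated hmon hlc
      (associated_of_dvd_of_natDegree_le hdvd hr0 (by omega))).symm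
  have hnext : m.nextCoeff = 1 := by rw [← coeff_one_reverse, heq, h1]
  have hr : Module.finrank (IntermediateField.adjoin (ZMod 2) {b⁻¹}) L = 1 := by
    have e1 := Module.finrank_mul_finrank (ZMod 2) (IntermediateField.adjoin (ZMod 2) {b⁻¹}) L
    rw [IntermediateField.adjoin.finrank hint, ← hm, hfin] at e1
    have : m.natDegree = f.natDegree := by omega
    rw [this] at e1
    have hp := hirr.natDegree_pos
    exact Nat.eq_of_mul_eq_mul_left hp (by rw [e1, mul_one])
  have htr : Algebra.trace (ZMod 2) L b⁻¹ = 1 := by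
    rw [trace_eq_finrank_mul_minpoly_nextCoeff, hr, ← hm, hnext]
    decide
  have hfrob : ∀ x : L, Algebra.trace (ZMod 2) L (x ^ 2) = Algebra.trace (ZMod 2) L x := by
    intro x
    have := Algebra.trace_eq_of_algEquiv
      (FiniteField.frobeniusAlgEquivOfAlgebraic (ZMod 2) L) x
    simpa [FiniteField.coe_frobeniusAlgEquivOfAlgebraic, ZMod.card] using this
  have h2 : (2 : L) = 0 := CharTwo.two_eq_zero
  have hrel : (a / b) ^ 2 + a / b = b⁻¹ ^ 2 := by
    have h3 : a ^ 2 + b * a = 1 := by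
      rw [hb]
      field_simp
      linear_combination (a ^ 2) * h2
    field_simp
    linear_combination h3
  have := congrArg (Algebra.trace (ZMod 2) L) hrel
  rw [map_add, hfrob, hfrob, htr, CharTwo.add_self_eq_zero] at this
  exact zero_ne_one this

lemma qt_irred (f : Polynomial (ZMod 2)) (hmon : f.Monic) (hirr : Irreducible f)
    (h0 : f.coeff 0 = 1) (h1 : f.coeff 1 = 1) : Irreducible (Qtrans f) := by
  obtain ⟨hQm, hQd⟩ := qt_monic_deg f hmon
  have hp := hirr.natDegree_pos
  have hnu : ¬ IsUnit (Qtrans f) := fun h => by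
    have := natDegree_eq_zero_of_isUnit h
    omega
  obtain ⟨g, hg, hgd⟩ := WfDvdMonoid.exists_irreducible_factor hnu hQm.ne_zero
  have : Fact (Irreducible g) := ⟨hg⟩
  have : FiniteDimensional (ZMod 2) (AdjoinRoot g) := (AdjoinRoot.powerBasis hg.ne_zero).finite
  have hfin : Module.finrank (ZMod 2) (AdjoinRoot g) = g.natDegree := by
    rw [(AdjoinRoot.powerBasis hg.ne_zero).finrank, AdjoinRoot.powerBasis_dim]
  set a : AdjoinRoot g := AdjoinRoot.root g with ha
  have hQa : aeval a (Qtrans f) = 0 := by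
    obtain ⟨k, hk⟩ := hgd
    rw [hk, map_mul, ha, AdjoinRoot.aeval_eq, AdjoinRoot.mk_self, zero_mul]
  have ha0 : a ≠ 0 := by
    intro h
    have hc : (Qtrans f).coeff 0 = 1 := by
      rw [← qt_reverse f hmon, coeff_zero_reverse]
      exact hQm
    rw [h, ← coeff_zero_eq_aeval_zero', hc] at hQa
    simp at hQa
  have hfa : aeval (a + a⁻¹) f = 0 := by
    rw [qt_eval f a ha0] at hQa
    exact (mul_eq_zero.1 hQa).resolve_left (pow_ne_zero _ ha0)
  have hne := key f hmon hirr h0 h1 a ha0 hfa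
  have hdvd : f.natDegree ∣ Module.finrank (ZMod 2) (AdjoinRoot g) := by
    rw [minpoly.eq_of_irreducible_of_monic hirr hfa hmon]
    exact minpoly.degree_dvd (.of_finite _ _)
  rw [hfin] at hne hdvd
  have hgp := hg.natDegree_pos
  have hge : 2 * f.natDegree ≤ g.natDegree := by
    obtain ⟨k, hk⟩ := hdvd
    have hk0 : k ≠ 0 := by rintro rfl; omega
    have hk1 : k ≠ 1 := by rintro rfl; omega
    have : 2 ≤ k := by omega
    rw [hk, mul_comm]
    exact Nat.mul_le_mul_left _ this
  exact (associated_of_dvd_of_natDegree_le hgd hQm.ne_zero (by omega)).irreducible hg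

theorem stmt_14 (n : ℕ) (hn : 1 ≤ n) (f : Polynomial (ZMod 2))
    (hmon : f.Monic) (hirr : Irreducible f) (hdeg : f.natDegree = n)
    (h0 : f.coeff 0 = 1) (hA : f.coeff (n - 1) = 1 ∧ f.coeff 1 = 1) :
    Irreducible (Qtrans f) ∧ (Qtrans f).natDegree = 2 * n ∧
      (Qtrans f).reverse = Qtrans f :=
  ⟨qt_irred f hmon hirr h0 hA.2, by rw [(qt_monic_deg f hmon).2, hdeg], qt_reverse f hmon⟩
end

section
/- If f ∈ F_2[x] is a monic irreducible polynomial of type (A,n) for some n ≥ 1, then f^Q is a monic irreducible polynomial of degree 2n of type (A,2n); consequently, the sequence defined by f_0 = f and f_{i+1} = f_i^Q consists entirely of irreducible polynomials, with deg f_i = 2^i · n. -/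
open Polynomial

lemma qq_even (k j : ℕ) : (((X : (ZMod 2)[X]) ^ 2 + 1) ^ k).coeff (2 * j + 1) = 0 := by
  have : ((X : (ZMod 2)[X]) ^ 2 + 1) ^ k = expand (ZMod 2) 2 ((X + 1) ^ k) := by simp
  rw [this, coeff_expand (by norm_num), if_neg (by omega)]

lemma qq_monic (k : ℕ) : (((X : (ZMod 2)[X]) ^ 2 + 1) ^ k).Monic :=
  (by monicity! : ((X : (ZMod 2)[X]) ^ 2 + 1).Monic).pow k

lemma qq_deg (k : ℕ) : (((X : (ZMod 2)[X]) ^ 2 + 1) ^ k).natDegree = 2 * k := by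
  rw [natDegree_pow]
  have : ((X : (ZMod 2)[X]) ^ 2 + 1).natDegree = 2 := by compute_degree!
  rw [this, mul_comm]

lemma qq_shape (m : ℕ) (f : (ZMod 2)[X]) (hmon : f.Monic) (hdeg : f.natDegree = m + 1) :
    ∃ S : (ZMod 2)[X], S.natDegree ≤ 2 * m ∧ S.coeff 1 = 0 ∧ S.coeff 0 = 0 ∧
      Qtrans f = (X ^ 2 + 1) ^ (m + 1) + (C (f.coeff m) * (X * (X ^ 2 + 1) ^ m) + S) := by
  refine ⟨∑ i ∈ Finset.range m, C (f.coeff i) * X ^ (m + 1 - i) * (X ^ 2 + 1) ^ i, ?_, ?_, ?_, ?_⟩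
  · refine natDegree_sum_le_of_forall_le _ _ fun i hi => ?_
    have := Finset.mem_range.mp hi
    refine natDegree_mul_le.trans ?_
    rw [qq_deg]
    have := natDegree_C_mul_X_pow_le (f.coeff i) (m + 1 - i)
    omega
  · rw [finsetSum_coeff]
    refine Finset.sum_eq_zero fun i hi => ?_
    have := Finset.mem_range.mp hi
    rw [mul_assoc, coeff_C_mul, coeff_X_pow_mul', if_neg (by omega), mul_zero]
  · rw [finsetSum_coeff]
    refine Finset.sum_eq_zero fun i hi => ?_
    have := Finset.mem_range.mp hi
    rw [mul_assoc, coeff_C_mul, coeff_X_pow_mul', if_neg (by omega), mul_zero]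
  · have h1 : f.coeff (m + 1) = 1 := by rw [← hdeg]; exact hmon
    unfold Qtrans
    rw [hdeg, Finset.sum_range_succ, Finset.sum_range_succ, h1]
    simp
    ring

lemma qq_basic (m : ℕ) (f : (ZMod 2)[X]) (hmon : f.Monic) (hdeg : f.natDegree = m + 1)
    (hA : f.coeff m = 1) :
    (Qtrans f).Monic ∧ (Qtrans f).natDegree = 2 * (m + 1) ∧ (Qtrans f).coeff (2 * m + 1) = 1 ∧
      (Qtrans f).coeff 1 = 1 ∧ (Qtrans f).coeff 0 = 1 := by
  obtain ⟨S, hS, hS1, hS0, hQ⟩ := qq_shape m f hmon hdeg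
  rw [hA, C_1, one_mul] at hQ
  have hd : (X * (X ^ 2 + 1) ^ m : (ZMod 2)[X]).natDegree ≤ 2 * m + 1 := by
    refine natDegree_mul_le.trans ?_
    rw [qq_deg, natDegree_X]; omega
  have hl : (X * (X ^ 2 + 1) ^ m + S : (ZMod 2)[X]).degree
      < ((X ^ 2 + 1 : (ZMod 2)[X]) ^ (m + 1)).degree := by
    apply degree_lt_degree
    rw [qq_deg]
    refine (natDegree_add_le _ _).trans_lt ?_
    omega
  rw [hQ]
  refine ⟨(qq_monic _).add_of_left hl, ?_, ?_, ?_, ?_⟩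
  · rw [natDegree_add_eq_left_of_degree_lt hl, qq_deg]
  · rw [coeff_add, coeff_add, qq_even, coeff_X_mul, coeff_eq_zero_of_natDegree_lt (by omega : S.natDegree < 2 * m + 1)]
    have := qq_monic m
    rw [Monic, leadingCoeff, qq_deg] at this
    simp [this]
  · have := qq_even (m + 1) 0
    rw [mul_zero, zero_add] at this
    rw [coeff_add, coeff_add, this, hS1, ← zero_add 1, coeff_X_mul]
    simp [coeff_zero_eq_eval_zero]
  · rw [coeff_add, coeff_add, hS0]
    simp [coeff_zero_eq_eval_zero]

lemma qq_aeval {K : Type*} [Field K] [Algebra (ZMod 2) K] (f : (ZMod 2)[X]) (b : K) (hb : b ≠ 0) :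
    aeval b (Qtrans f) = b ^ f.natDegree * aeval (b + b⁻¹) f := by
  unfold Qtrans
  rw [aeval_eq_sum_range (p := f), map_sum, Finset.mul_sum]
  refine Finset.sum_congr rfl fun i hi => ?_
  have hi := Finset.mem_range.mp hi
  have h2 : b ^ f.natDegree = b ^ (f.natDegree - i) * b ^ i := by
    rw [← pow_add]; congr 1; omega
  have h3 : b ^ 2 + 1 = b * (b + b⁻¹) := by field_simp
  rw [h2, Algebra.smul_def]
  simp only [map_mul, map_pow, map_add, aeval_X, aeval_C, map_one, h3, mul_pow]
  ring

lemma qq_trace {K : Type*} [Field K] [Algebra (ZMod 2) K] [FiniteDimensional (ZMod 2) K]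
    (f : (ZMod 2)[X]) (hmon : f.Monic) (hirr : Irreducible f) (h0 : f.coeff 0 ≠ 0)
    (h1 : f.coeff 1 = 1) (hd : 1 ≤ f.natDegree)
    (hK : Module.finrank (ZMod 2) K ≤ f.natDegree) (a : K) (ha0 : a ≠ 0) (ha : aeval a f = 0) :
    Algebra.trace (ZMod 2) K a⁻¹ = 1 := by
  have hmin : f = minpoly (ZMod 2) a := minpoly.eq_of_irreducible_of_monic hirr ha hmon
  have hint : ∀ x : K, IsIntegral (ZMod 2) x := fun x => .of_finite _ x
  have hfr := IntermediateField.adjoin.finrank (hint a)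
  rw [← hmin] at hfr
  have htop : IntermediateField.adjoin (ZMod 2) {a} = ⊤ :=
    IntermediateField.eq_of_le_of_finrank_le le_top (by
      rw [hfr, IntermediateField.finrank_top']; exact hK)
  have htop' : IntermediateField.adjoin (ZMod 2) {a⁻¹} = ⊤ := by
    rw [eq_top_iff, ← htop, IntermediateField.adjoin_simple_le_iff]
    simpa using inv_mem (IntermediateField.mem_adjoin_simple_self (ZMod 2) a⁻¹)
  have hfr' := IntermediateField.adjoin.finrank (hint a⁻¹)
  rw [htop', ← htop, hfr] at hfr'
  have hrd : f.reverse.natDegree = f.natDegree := by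
    rw [reverse_natDegree, natTrailingDegree_eq_zero.mpr (Or.inr h0), tsub_zero]
  have hrm : f.reverse.Monic := by
    rw [Monic, reverse_leadingCoeff, trailingCoeff_eq_coeff_zero h0]
    generalize f.coeff 0 = c at h0
    revert c; decide
  have hr0 : aeval a⁻¹ f.reverse = 0 := by
    letI := invertibleOfNonzero ha0
    have := (eval₂_reverse_eq_zero_iff (algebraMap (ZMod 2) K) a f).mpr ha
    rwa [invOf_eq_inv] at this
  have hmr : minpoly (ZMod 2) a⁻¹ = f.reverse :=
    (eq_of_monic_of_dvd_of_natDegree_le (minpoly.monic (hint _)) hrm (minpoly.dvd _ _ hr0)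
      (by rw [hrd, hfr'])).symm
  rw [trace_eq_finrank_mul_minpoly_nextCoeff, hmr, htop', IntermediateField.finrank_top,
    nextCoeff, hrd, if_neg (by omega), coeff_reverse, revAt_le (by omega),
    Nat.sub_sub_self hd, h1]
  decide

lemma qq_tr0 {K : Type*} [Field K] [Algebra (ZMod 2) K] [FiniteDimensional (ZMod 2) K]
    (b : K) (hb : b ≠ 0) (ha : b + b⁻¹ ≠ 0) :
    Algebra.trace (ZMod 2) K (b + b⁻¹)⁻¹ = 0 := by
  have hsq : ∀ x : K, Algebra.trace (ZMod 2) K (x ^ 2) = Algebra.trace (ZMod 2) K x := by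
    intro x
    have := Algebra.trace_eq_of_algEquiv (FiniteField.frobeniusAlgEquivOfAlgebraic (ZMod 2) K) x
    rw [FiniteField.coe_frobeniusAlgEquivOfAlgebraic] at this
    simpa using this
  have : CharP K 2 := charP_of_injective_algebraMap (algebraMap (ZMod 2) K).injective 2
  have h2 : (2 : K) = 0 := CharTwo.two_eq_zero
  have hz : ((b + b⁻¹)⁻¹) ^ 2 = (b * (b + b⁻¹)⁻¹) ^ 2 + b * (b + b⁻¹)⁻¹ := by
    have e : 1 = b ^ 2 + b * (b + b⁻¹) := by
      rw [mul_add, mul_inv_cancel₀ hb]; linear_combination (- b ^ 2) * h2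
    generalize b + b⁻¹ = a at ha e
    field_simp
    linear_combination e
  rw [← hsq, hz, map_add, hsq]
  exact CharTwo.add_self_eq_zero _

lemma qq_main (m : ℕ) (f : (ZMod 2)[X]) (hmon : f.Monic) (hirr : Irreducible f)
    (hdeg : f.natDegree = m + 1) (hA : f.coeff m = 1) (h1 : f.coeff 1 = 1) :
    Irreducible (Qtrans f) := by
  have h0 : f.coeff 0 ≠ 0 := by
    intro h0
    have hX : X = f := eq_of_monic_of_associated monic_X hmon
      (irreducible_X.associated_of_dvd hirr (X_dvd_iff.mpr h0))
    rw [← hX, natDegree_X] at hdeg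
    have : m = 0 := by omega
    rw [this, h0] at hA
    exact zero_ne_one hA
  obtain ⟨hM, hD, -, -, hQ0⟩ := qq_basic m f hmon hdeg hA
  have hne : Qtrans f ≠ 1 := by
    intro h; rw [h, natDegree_one] at hD; omega
  rw [hM.irreducible_iff_lt_natDegree_lt hne]
  intro q hq hqd hdvd
  rw [hD, Finset.mem_Ioc] at hqd
  have hqu : ¬ IsUnit q := fun h => by
    have := natDegree_eq_zero_of_isUnit h; omega
  obtain ⟨g, hg, hgq⟩ := WfDvdMonoid.exists_irreducible_factor hqu hq.ne_zero
  have hgd : g.natDegree ≤ m + 1 := (natDegree_le_of_dvd hgq hq.ne_zero).trans (by omega)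
  haveI : Fact (Irreducible g) := ⟨hg⟩
  let pb := AdjoinRoot.powerBasis hg.ne_zero
  haveI : FiniteDimensional (ZMod 2) (AdjoinRoot g) := pb.finite
  have hfin : Module.finrank (ZMod 2) (AdjoinRoot g) = g.natDegree := by
    rw [pb.finrank, AdjoinRoot.powerBasis_dim]
  have hroot : aeval (AdjoinRoot.root g) (Qtrans f) = 0 := by
    rw [AdjoinRoot.aeval_eq, AdjoinRoot.mk_eq_zero]; exact hgq.trans hdvd
  generalize AdjoinRoot.root g = b at hroot
  have hb : b ≠ 0 := by
    rintro rfl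
    rw [← coeff_zero_eq_aeval_zero', hQ0, map_one] at hroot
    exact one_ne_zero hroot
  rw [qq_aeval f b hb] at hroot
  have hroot := (mul_eq_zero.mp hroot).resolve_left (pow_ne_zero _ hb)
  have ha : b + b⁻¹ ≠ 0 := by
    intro h
    rw [h, ← coeff_zero_eq_aeval_zero'] at hroot
    exact h0 ((map_eq_zero _).mp hroot)
  have t1 := qq_trace f hmon hirr h0 h1 (by omega) (by omega) _ ha hroot
  rw [qq_tr0 b hb ha] at t1
  exact zero_ne_one t1

theorem stmt_15 (n : ℕ) (hn : 1 ≤ n) (f : Polynomial (ZMod 2))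
    (hmon : f.Monic) (hirr : Irreducible f) (hdeg : f.natDegree = n)
    (hA : f.coeff (n - 1) = 1 ∧ f.coeff 1 = 1) :
    ((Qtrans f).Monic ∧ Irreducible (Qtrans f) ∧ (Qtrans f).natDegree = 2 * n ∧
      (Qtrans f).coeff (2 * n - 1) = 1 ∧ (Qtrans f).coeff 1 = 1) ∧
    (∀ F : ℕ → Polynomial (ZMod 2), F 0 = f → (∀ i, F (i + 1) = Qtrans (F i)) →
      ∀ i, Irreducible (F i) ∧ (F i).natDegree = 2 ^ i * n) := by
  have key : ∀ (n : ℕ) (f : Polynomial (ZMod 2)), 1 ≤ n → f.Monic → Irreducible f →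
      f.natDegree = n → f.coeff (n - 1) = 1 → f.coeff 1 = 1 →
      ((Qtrans f).Monic ∧ Irreducible (Qtrans f) ∧ (Qtrans f).natDegree = 2 * n ∧
      (Qtrans f).coeff (2 * n - 1) = 1 ∧ (Qtrans f).coeff 1 = 1) := by
    intro n f hn hmon hirr hdeg hA h1
    obtain ⟨m, rfl⟩ : ∃ m, n = m + 1 := ⟨n - 1, by omega⟩
    obtain ⟨a, b, c, d, -⟩ := qq_basic m f hmon hdeg hA
    exact ⟨a, qq_main m f hmon hirr hdeg hA h1, b, c, d⟩
  refine ⟨key n f hn hmon hirr hdeg hA.1 hA.2, ?_⟩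
  intro F hF0 hF i
  have : (F i).Monic ∧ Irreducible (F i) ∧ (F i).natDegree = 2 ^ i * n ∧
      (F i).coeff (2 ^ i * n - 1) = 1 ∧ (F i).coeff 1 = 1 := by
    induction i with
    | zero => rw [hF0, pow_zero, one_mul]; exact ⟨hmon, hirr, hdeg, hA.1, hA.2⟩
    | succ i ih =>
      obtain ⟨a, b, c, d, e⟩ := ih
      have := key (2 ^ i * n) (F i) (Nat.mul_pos (by positivity) hn) a b c d e
      rw [hF, pow_succ', mul_assoc]
      exact this
  exact ⟨this.2.1, this.2.2.1⟩
end
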